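/- arXiv:2105.06924 — 3 statements merged into one kernel-verified Lean document; each statement's English description precedes it below -/
import Mathlib

section
/- For tensors A ∈ ℝ^{n1×n2×n3}, B ∈ ℝ^{n2×m×n3} and C ∈ ℝ^{n1×m×n3}, one has mat(C) = mat(A) · mat(B) if and only if for every i with 1 ≤ i ≤ n3 the transformed slices satisfy C̃^{(i)} = Ã^{(i)} · B̃^{(i)}. (This is the correctness of the slicewise algorithm for computing the c-product.) -/
open Matrix BigOperators Kronecker

noncomputable section

/-- The `n × n` discrete cosine transform (DCT) matrix, with 0-based indexing of the 1-based
formula `(C_n)_{ij} = √((2−δ_{i1})/n)·cos((i−1)(2j−1)π/(2n))`. -/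
def dctMatrix (n : ℕ) : Matrix (Fin n) (Fin n) ℝ :=
  Matrix.of fun i j =>
    Real.sqrt ((2 - if (i : ℕ) = 0 then 1 else 0) / n) *
      Real.cos ((i : ℝ) * (2 * (j : ℝ) + 1) * Real.pi / (2 * n))

/-- The `n × n` upshift matrix `Z`, with ones on the first superdiagonal. -/
def upshift (n : ℕ) : Matrix (Fin n) (Fin n) ℝ :=
  Matrix.of fun i j => if (i : ℕ) + 1 = (j : ℕ) then 1 else 0

/-- `W = diag(C_n(:,1))`, the diagonal matrix whose diagonal is the first column of the DCT
matrix. -/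
def Wdiag (n : ℕ) : Matrix (Fin n) (Fin n) ℝ :=
  Matrix.diagonal fun i => dctMatrix n i ⟨0, i.pos⟩

/-- The `n × n` transform matrix `M = W⁻¹ C_n (I + Z)`. -/
def transformM (n : ℕ) : Matrix (Fin n) (Fin n) ℝ :=
  (Wdiag n)⁻¹ * dctMatrix n * (1 + upshift n)

/-- The Hankel part `H_{p,q}` of the `(p,q)` block of `mat(A)` (0-based indices:
the 1-based conditions `p+q ≤ n3`, `p+q = n3+1`, `p+q ≥ n3+2` become
`p+q+1 < n3`, `p+q+1 = n3` and `p+q+1 > n3`, with blocks `A^{(p+q+1)}` resp. `0`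
resp. `A^{(2·n3−(p+q)−1)}` in 0-based numbering of the slices). -/
def hankelPart {n1 n2 n3 : ℕ} (A : Fin n3 → Matrix (Fin n1) (Fin n2) ℝ) (p q : Fin n3) :
    Matrix (Fin n1) (Fin n2) ℝ :=
  if h : p.val + q.val + 1 < n3 then A ⟨p.val + q.val + 1, h⟩
  else if h' : p.val + q.val + 1 = n3 then 0
  else A ⟨2 * n3 - (p.val + q.val) - 1, by
    have hp := p.isLt; have hq := q.isLt; omega⟩

/-- `mat(A)`: the block Toeplitz-plus-Hankel matrix associated with a third-order tensor `A`,
identified with the tuple of its frontal slices.  Rows are indexed by `Fin n3 × Fin n1`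
(block row, row within block) and columns by `Fin n3 × Fin n2`. -/
def tmat {n1 n2 n3 : ℕ} (A : Fin n3 → Matrix (Fin n1) (Fin n2) ℝ) :
    Matrix (Fin n3 × Fin n1) (Fin n3 × Fin n2) ℝ :=
  Matrix.of fun pi qj =>
    (A ⟨Nat.dist pi.1.val qj.1.val, by
        have hp := pi.1.isLt; have hq := qj.1.isLt
        simp only [Nat.dist]; omega⟩ + hankelPart A pi.1 qj.1) pi.2 qj.2

/-- The `p`-th transformed slice `Ã^{(p)} = Σ_q M_{pq} A^{(q)}` of a tensor `A`. -/
def tSlice {n1 n2 n3 : ℕ} (A : Fin n3 → Matrix (Fin n1) (Fin n2) ℝ) (p : Fin n3) :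
    Matrix (Fin n1) (Fin n2) ℝ :=
  ∑ q, transformM n3 p q • A q

/-- Toeplitz-plus-Hankel matrix `th(v)` of a vector `v ∈ ℝⁿ` (0-based indexing of the 1-based
formula of the paper). -/
def thMat {n : ℕ} (v : Fin n → ℝ) : Matrix (Fin n) (Fin n) ℝ :=
  Matrix.of fun p q =>
    v ⟨Nat.dist p.val q.val, by
        have hp := p.isLt; have hq := q.isLt; simp only [Nat.dist]; omega⟩ +
    (if h : p.val + q.val + 1 < n then v ⟨p.val + q.val + 1, h⟩
     else if h' : p.val + q.val + 1 = n then 0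
     else v ⟨2 * n - (p.val + q.val) - 1, by
       have hp := p.isLt; have hq := q.isLt; omega⟩)

/-- The product `a ⊛ B` of a tube `a ∈ ℝ^{1×1×n3}` (identified with a vector of `ℝ^{n3}`) with a
tensor `B`: the tensor whose transformed slices are `(a ⊛ B)~^{(p)} = (M a)_p • B̃^{(p)}`. -/
def tubeSMul {n1 n2 n3 : ℕ} (a : Fin n3 → ℝ) (B : Fin n3 → Matrix (Fin n1) (Fin n2) ℝ) :
    Fin n3 → Matrix (Fin n1) (Fin n2) ℝ :=
  fun t => ∑ p, (transformM n3)⁻¹ t p • ((transformM n3).mulVec a p • tSlice B p)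

/-- The c-product `a ⋆_c b` of two tubes: the tube whose transform is the componentwise product
of the transforms, `M (a ⋆_c b) = (M a) .* (M b)`. -/
def tubeCMul {n3 : ℕ} (a b : Fin n3 → ℝ) : Fin n3 → ℝ :=
  (transformM n3)⁻¹.mulVec fun p => (transformM n3).mulVec a p * (transformM n3).mulVec b p

/-- Frobenius norm of a real matrix. -/
def frobNorm {m n : ℕ} (B : Matrix (Fin m) (Fin n) ℝ) : ℝ :=
  Real.sqrt (∑ i, ∑ j, (B i j) ^ 2)

/-- Frobenius norm of a third-order tensor. -/
def tFrobNorm {n1 n2 n3 : ℕ} (A : Fin n3 → Matrix (Fin n1) (Fin n2) ℝ) : ℝ :=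
  Real.sqrt (∑ k, ∑ i, ∑ j, (A k i j) ^ 2)

/-- The `i`-th lateral slice `U(:,i,:)` of a tensor `U`: the `n1 × 1 × n3` tensor whose `k`-th
frontal slice is the `i`-th column of `U^{(k)}`. -/
def lateralSlice {n1 n2 n3 : ℕ} (U : Fin n3 → Matrix (Fin n1) (Fin n2) ℝ) (i : Fin n2) :
    Fin n3 → Matrix (Fin n1) (Fin 1) ℝ :=
  fun k => Matrix.of fun r _ => U k r i

/-- The `(i,j)` tube `S(i,j,:)` of a tensor `S`: the `1 × 1 × n3` tensor whose `k`-th frontal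
slice is the `(i,j)` entry of `S^{(k)}`. -/
def entryTube {n1 n2 n3 : ℕ} (S : Fin n3 → Matrix (Fin n1) (Fin n2) ℝ) (i : Fin n1) (j : Fin n2) :
    Fin n3 → Matrix (Fin 1) (Fin 1) ℝ :=
  fun k => Matrix.of fun _ _ => S k i j

/-- Slicewise transpose of a tensor. -/
def sTranspose {n1 n2 n3 : ℕ} (A : Fin n3 → Matrix (Fin n1) (Fin n2) ℝ) :
    Fin n3 → Matrix (Fin n2) (Fin n1) ℝ :=
  fun k => (A k)ᵀ

/-- `TVect(A)`: stacking the lateral slices of `A` one below the other; the `k`-th frontal slice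
of `TVect(A)` is obtained by stacking the columns of `A^{(k)}` (entry `r = j·n1 + i` is
`A^{(k)}_{i,j}`). -/
def tvect {n1 n2 n3 : ℕ} (A : Fin n3 → Matrix (Fin n1) (Fin n2) ℝ) :
    Fin n3 → Matrix (Fin (n1 * n2)) (Fin 1) ℝ :=
  fun k => Matrix.of fun r _ =>
    A k ⟨r.val % n1, Nat.mod_lt _ (Nat.pos_of_ne_zero fun h0 => absurd r.isLt (by simp [h0]))⟩
        ⟨r.val / n1, Nat.div_lt_of_lt_mul r.isLt⟩

/-- The cosine vectors diagonalizing all Toeplitz-plus-Hankel matrices. -/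
def cosV (n k p : ℕ) : ℝ := Real.cos ((k : ℝ) * (2 * (p : ℝ) + 1) * Real.pi / (2 * n))

/-- Coefficient of the slice `t` in the block `(p,q)`. -/
def kerK (n p q t : ℕ) : ℝ :=
  (if Nat.dist p q = t then 1 else 0) + (if p + q + 1 = t ∨ p + q + 1 + t = 2 * n then 1 else 0)

/-- The blocks of `tmat`. -/
def blk {n1 n2 n3 : ℕ} (A : Fin n3 → Matrix (Fin n1) (Fin n2) ℝ) (p q : Fin n3) :
    Matrix (Fin n1) (Fin n2) ℝ := ∑ t : Fin n3, kerK n3 p q t • A t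

lemma kerK_zero {n p q : ℕ} (hp : p < n) (hq : q < n) :
    kerK n p q 0 = if p = q then 1 else 0 := by
  unfold kerK
  rw [if_neg (by omega : ¬ (p + q + 1 = 0 ∨ p + q + 1 + 0 = 2 * n)), add_zero]
  congr 1
  simp only [Nat.dist, eq_iff_iff]; omega

lemma kerK_pos {n p q t : ℕ} (hp : p < n) (hq : q < n) (ht : t < n) (ht0 : 0 < t) :
    kerK n p q t = (if p = (if q + t < n then q + t else 2 * n - 1 - q - t) then 1 else 0)
      + (if p = (if t ≤ q then q - t else t - q - 1) then 1 else 0) := by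
  unfold kerK
  obtain ⟨d, hd⟩ : ∃ d, Nat.dist p q = d := ⟨_, rfl⟩
  rw [hd]
  simp only [Nat.dist] at hd
  split_ifs <;> first | omega | norm_num

lemma cosV_reflect_right {n k q t : ℕ} (hn : 0 < n) (hq : q < n) (ht : t < n) :
    cosV n k (if q + t < n then q + t else 2 * n - 1 - q - t) =
      Real.cos ((k : ℝ) * (2 * ((q : ℝ) + t) + 1) * Real.pi / (2 * n)) := by
  have hn' : (n : ℝ) ≠ 0 := by positivity
  unfold cosV
  split_ifs with h
  · push_cast; rfl
  · have h1 : ((2 * n - 1 - q - t : ℕ) : ℝ) = 2 * n - 1 - q - t := by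
      rw [Nat.cast_sub (by omega), Nat.cast_sub (by omega), Nat.cast_sub (by omega)]
      push_cast; ring
    rw [h1, ← Real.cos_neg ((k : ℝ) * (2 * ((q : ℝ) + t) + 1) * Real.pi / (2 * n)),
      
      ← Real.cos_add_nat_mul_two_pi (-((k : ℝ) * (2 * ((q : ℝ) + t) + 1) * Real.pi / (2 * n))) k]
    congr 1
    field_simp
    ring

lemma cosV_reflect_left {n k q t : ℕ} :
    cosV n k (if t ≤ q then q - t else t - q - 1) =
      Real.cos ((k : ℝ) * (2 * ((q : ℝ) - t) + 1) * Real.pi / (2 * n)) := by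
  unfold cosV
  split_ifs with h
  · rw [Nat.cast_sub h]
  · have h1 : ((t - q - 1 : ℕ) : ℝ) = t - q - 1 := by
      rw [Nat.cast_sub (by omega), Nat.cast_sub (by omega)]
      push_cast; ring
    rw [h1, ← Real.cos_neg]
    congr 1
    ring

lemma cosV_zero_pos {n k : ℕ} (hk : k < n) : 0 < cosV n k 0 := by
  have hn : (0 : ℝ) < n := by exact_mod_cast (by omega : 0 < n)
  have hk' : (k : ℝ) < n := by exact_mod_cast hk
  have hpi := Real.pi_pos
  unfold cosV
  apply Real.cos_pos_of_mem_Ioo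
  constructor
  · have : (0 : ℝ) ≤ (k : ℝ) * (2 * ((0 : ℕ) : ℝ) + 1) * Real.pi / (2 * n) := by positivity
    linarith
  · rw [div_lt_div_iff₀ (by positivity) (by positivity)]
    push_cast
    nlinarith

lemma transformM_apply {n : ℕ} (k t : Fin n) :
    transformM n k t =
      if (t : ℕ) = 0 then 1 else 2 * Real.cos ((k : ℝ) * (2 * t) * Real.pi / (2 * n)) := by
  have hn : 0 < n := k.pos
  have hn' : (0 : ℝ) < n := by exact_mod_cast hn
  have hs : ∀ i : Fin n, 0 < Real.sqrt ((2 - if (i : ℕ) = 0 then 1 else 0) / n) := by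
    intro i
    apply Real.sqrt_pos.2
    split_ifs <;> norm_num <;> exact hn
  have hd : ∀ i j : Fin n, dctMatrix n i j =
      Real.sqrt ((2 - if (i : ℕ) = 0 then 1 else 0) / n) * cosV n i j := fun i j => rfl
  have hw : ∀ i : Fin n, dctMatrix n i ⟨0, i.pos⟩ ≠ 0 := by
    intro i
    rw [hd]
    exact (mul_pos (hs i) (cosV_zero_pos i.isLt)).ne'
  have hdet : IsUnit (Wdiag n).det := by
    rw [Wdiag, Matrix.det_diagonal]
    exact (Finset.prod_ne_zero_iff.2 fun i _ => hw i).isUnit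
  have hM : Wdiag n * transformM n = dctMatrix n * (1 + upshift n) := by
    rw [transformM, Matrix.mul_assoc, Matrix.mul_nonsing_inv_cancel_left _ _ hdet]
  have he := congrFun (congrFun hM k) t
  rw [Wdiag, Matrix.diagonal_mul, Matrix.mul_add, Matrix.mul_one, Matrix.add_apply,
    Matrix.mul_apply] at he
  apply mul_left_cancel₀ (hw k)
  rw [he]
  by_cases h0 : (t : ℕ) = 0
  · rw [if_pos h0, Finset.sum_eq_zero]
    · have : t = ⟨0, k.pos⟩ := Fin.ext h0
      rw [this]; ring
    · intro j _
      simp [upshift, h0]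
  · rw [if_neg h0, Finset.sum_eq_single (⟨t - 1, by omega⟩ : Fin n)]
    · simp only [upshift, Matrix.of_apply]
      rw [if_pos (by omega), hd, hd, hd, mul_one, ← mul_add, mul_assoc]
      congr 1
      unfold cosV
      simp only []
      rw [Nat.cast_sub (by omega)]
      set a : ℝ := (k : ℝ) * (2 * t) * Real.pi / (2 * n)
      set b : ℝ := (k : ℝ) * (2 * ((0 : ℕ) : ℝ) + 1) * Real.pi / (2 * n)
      have h1 : (k : ℝ) * (2 * (t : ℝ) + 1) * Real.pi / (2 * n) = a + b := by
        simp only [a, b]; push_cast; ring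
      have h2 : (k : ℝ) * (2 * ((t : ℝ) - ((1 : ℕ) : ℝ)) + 1) * Real.pi / (2 * n) = a - b := by
        simp only [a, b]; push_cast; ring
      rw [h1, h2, Real.cos_add, Real.cos_sub]
      ring
    · intro j _ hj
      simp only [upshift, Matrix.of_apply]
      rw [if_neg, mul_zero]
      intro h
      apply hj
      apply Fin.ext
      simp only []
      omega
    · intro h; exact absurd (Finset.mem_univ _) h

lemma sum_ite_val {n : ℕ} (f : ℕ → ℝ) {r : ℕ} (hr : r < n) :
    ∑ p : Fin n, f p * (if (p : ℕ) = r then 1 else 0) = f r := by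
  rw [Finset.sum_eq_single (⟨r, hr⟩ : Fin n)]
  · simp
  · intro j _ hj
    rw [if_neg, mul_zero]
    intro h; exact hj (Fin.ext h)
  · intro h; exact absurd (Finset.mem_univ _) h

lemma cosV_kerK {n : ℕ} (k q t : Fin n) :
    ∑ p : Fin n, cosV n k p * kerK n p q t = cosV n k q * transformM n k t := by
  have hn := k.pos
  have hq := q.isLt
  have ht := t.isLt
  rw [transformM_apply]
  by_cases h0 : (t : ℕ) = 0
  · rw [if_pos h0, h0, mul_one, ← sum_ite_val (cosV n k) q.isLt]
    exact Finset.sum_congr rfl fun p _ => by rw [kerK_zero p.isLt q.isLt]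
  · rw [if_neg h0]
    have : ∀ p : Fin n, cosV n k p * kerK n p q t =
        cosV n k p * (if (p : ℕ) = (if (q : ℕ) + t < n then (q : ℕ) + t else 2 * n - 1 - q - t)
          then 1 else 0) +
        cosV n k p * (if (p : ℕ) = (if (t : ℕ) ≤ q then (q : ℕ) - t else t - q - 1)
          then 1 else 0) := by
      intro p
      rw [kerK_pos p.isLt q.isLt t.isLt (by omega), mul_add]
    rw [Finset.sum_congr rfl fun p _ => this p, Finset.sum_add_distrib,
      sum_ite_val (cosV n k) (by split_ifs <;> omega),
      sum_ite_val (cosV n k) (by split_ifs <;> omega),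
      cosV_reflect_right hn hq ht, cosV_reflect_left]
    unfold cosV
    set a : ℝ := (k : ℝ) * (2 * t) * Real.pi / (2 * n)
    set b : ℝ := (k : ℝ) * (2 * (q : ℝ) + 1) * Real.pi / (2 * n)
    have h1 : (k : ℝ) * (2 * ((q : ℝ) + t) + 1) * Real.pi / (2 * n) = b + a := by
      simp only [a, b]; ring
    have h2 : (k : ℝ) * (2 * ((q : ℝ) - t) + 1) * Real.pi / (2 * n) = b - a := by
      simp only [a, b]; ring
    rw [h1, h2, Real.cos_add, Real.cos_sub]
    ring

lemma sum_ite_smul {n : ℕ} {E : Type*} [AddCommGroup E] [Module ℝ E] (A : Fin n → E)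
    (P : ℕ → Prop) [DecidablePred P] (s : Fin n) (hs : ∀ t : Fin n, P t ↔ t = s) :
    ∑ t : Fin n, (if P t then (1 : ℝ) else 0) • A t = A s := by
  rw [Finset.sum_eq_single s]
  · rw [if_pos ((hs s).2 rfl), one_smul]
  · intro j _ hj
    rw [if_neg (fun h => hj ((hs j).1 h)), zero_smul]
  · intro h; exact absurd (Finset.mem_univ _) h

lemma tmat_apply {n1 n2 n3 : ℕ} (A : Fin n3 → Matrix (Fin n1) (Fin n2) ℝ) (p q : Fin n3)
    (i : Fin n1) (j : Fin n2) : tmat A (p, i) (q, j) = blk A p q i j := by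
  have hp := p.isLt
  have hq := q.isLt
  unfold tmat blk kerK
  simp only [Matrix.of_apply, add_smul, Finset.sum_add_distrib]
  refine congrFun (congrFun (congrArg₂ (· + ·) ?_ ?_) i) j
  · rw [sum_ite_smul A (fun t => Nat.dist p q = t)]
    intro t
    rw [Fin.ext_iff]
    exact eq_comm
  · unfold hankelPart
    split_ifs with h h'
    · rw [sum_ite_smul A (fun t => (p : ℕ) + q + 1 = t ∨ (p : ℕ) + q + 1 + t = 2 * n3)]
      intro t
      rw [Fin.ext_iff]
      have := t.isLt
      simp only []
      omega
    · rw [Finset.sum_eq_zero]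
      intro t _
      have := t.isLt
      rw [if_neg (by omega), zero_smul]
    · rw [sum_ite_smul A (fun t => (p : ℕ) + q + 1 = t ∨ (p : ℕ) + q + 1 + t = 2 * n3)]
      intro t
      rw [Fin.ext_iff]
      have := t.isLt
      simp only []
      omega

lemma cosV_blk {n1 n2 n3 : ℕ} (A : Fin n3 → Matrix (Fin n1) (Fin n2) ℝ) (k q : Fin n3) :
    ∑ p : Fin n3, cosV n3 k p • blk A p q = cosV n3 k q • tSlice A k := by
  unfold blk tSlice
  simp only [Finset.smul_sum, smul_smul]
  rw [Finset.sum_comm]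
  refine Finset.sum_congr rfl fun t _ => ?_
  rw [← Finset.sum_smul, cosV_kerK]

lemma cosV_injective {n : ℕ} (x : Fin n → ℝ)
    (h : ∀ k : Fin n, ∑ p : Fin n, cosV n k p * x p = 0) : x = 0 := by
  have key : ∀ m k : ℕ, m + k < n →
      ∑ p : Fin n, cosV n 1 p ^ m * cosV n k p * x p = 0 := by
    intro m
    induction m with
    | zero =>
      intro k hk
      simpa using h ⟨k, by omega⟩
    | succ m ih =>
      intro k hk
      rcases k with _ | k
      · have := ih 1 (by omega)
        rw [← this]
        refine Finset.sum_congr rfl fun p _ => ?_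
        have : cosV n 0 p = 1 := by simp [cosV]
        rw [this]; ring
      · have h1 := ih k (by omega)
        have h2 := ih (k + 2) (by omega)
        have : ∀ p : Fin n, cosV n 1 p ^ (m + 1) * cosV n (k + 1) p * x p =
            (1 / 2) * (cosV n 1 p ^ m * cosV n k p * x p) +
            (1 / 2) * (cosV n 1 p ^ m * cosV n (k + 2) p * x p) := by
          intro p
          have e : cosV n k p + cosV n (k + 2) p = 2 * cosV n 1 p * cosV n (k + 1) p := by
            unfold cosV
            set a : ℝ := ((1 : ℕ) : ℝ) * (2 * (p : ℝ) + 1) * Real.pi / (2 * n)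
            set b : ℝ := ((k + 1 : ℕ) : ℝ) * (2 * (p : ℝ) + 1) * Real.pi / (2 * n)
            have e1 : (k : ℝ) * (2 * (p : ℝ) + 1) * Real.pi / (2 * n) = b - a := by
              simp only [a, b]; push_cast; ring
            have e2 : ((k + 2 : ℕ) : ℝ) * (2 * (p : ℝ) + 1) * Real.pi / (2 * n) = b + a := by
              simp only [a, b]; push_cast; ring
            rw [e1, e2, Real.cos_add, Real.cos_sub]
            ring
          have e3 : cosV n (k + 2) p = 2 * cosV n 1 p * cosV n (k + 1) p - cosV n k p := by
            linarith
          rw [e3]; ring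
        rw [Finset.sum_congr rfl fun p _ => this p, Finset.sum_add_distrib, ← Finset.mul_sum,
          ← Finset.mul_sum, h1, h2]
        ring
  have hinj : Function.Injective (fun p : Fin n => cosV n 1 p) := by
    intro p q hpq
    have hn : (0 : ℝ) < n := by exact_mod_cast p.pos
    have hpi := Real.pi_pos
    have mem : ∀ r : Fin n, ((1 : ℕ) : ℝ) * (2 * (r : ℝ) + 1) * Real.pi / (2 * n)
        ∈ Set.Icc 0 Real.pi := by
      intro r
      have hr : (r : ℝ) + 1 ≤ n := by exact_mod_cast r.isLt
      constructor
      · positivity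
      · rw [div_le_iff₀ (by positivity)]
        push_cast
        nlinarith
    have := Real.injOn_cos (mem p) (mem q) hpq
    field_simp at this
    apply Fin.ext
    have h2 : (p : ℝ) = q := by linarith
    exact_mod_cast h2
  apply Matrix.eq_zero_of_forall_pow_sum_mul_pow_eq_zero hinj
  intro i
  have := key i 0 (by omega)
  rw [← this]
  refine Finset.sum_congr rfl fun p _ => ?_
  have : cosV n 0 p = 1 := by simp [cosV]
  rw [this]; ring

lemma tmat_eq_iff {n1 n2 m n3 : ℕ}
    (A : Fin n3 → Matrix (Fin n1) (Fin n2) ℝ) (B : Fin n3 → Matrix (Fin n2) (Fin m) ℝ)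
    (C : Fin n3 → Matrix (Fin n1) (Fin m) ℝ) :
    tmat C = tmat A * tmat B ↔ ∀ p q, blk C p q = ∑ r, blk A p r * blk B r q := by
  have e : ∀ p i q j, (tmat A * tmat B) (p, i) (q, j) = (∑ r, blk A p r * blk B r q) i j := by
    intro p i q j
    rw [Matrix.mul_apply, Fintype.sum_prod_type, Matrix.sum_apply]
    refine Finset.sum_congr rfl fun r _ => ?_
    rw [Matrix.mul_apply]
    simp only [tmat_apply]
  constructor
  · intro h p q
    ext i j
    rw [← e, ← tmat_apply, h]
  · intro h
    ext ⟨p, i⟩ ⟨q, j⟩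
    rw [e, tmat_apply, h]

lemma cosV_blk_mul {n1 n2 m n3 : ℕ}
    (A : Fin n3 → Matrix (Fin n1) (Fin n2) ℝ) (B : Fin n3 → Matrix (Fin n2) (Fin m) ℝ)
    (k q : Fin n3) :
    ∑ p : Fin n3, cosV n3 k p • (∑ r, blk A p r * blk B r q) =
      cosV n3 k q • (tSlice A k * tSlice B k) := by
  simp only [Finset.smul_sum]
  rw [Finset.sum_comm]
  simp only [← Matrix.smul_mul]
  simp only [← Matrix.sum_mul, cosV_blk]
  simp only [Matrix.smul_mul, ← Matrix.mul_smul]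
  rw [← Matrix.mul_sum, cosV_blk]

/-- `mat(C) = mat(A) · mat(B)` if and only if for every `i` the transformed
slices satisfy `C̃^{(i)} = Ã^{(i)} · B̃^{(i)}` (correctness of the slicewise algorithm for the
c-product). -/
theorem cProd_iff_slicewise {n1 n2 m n3 : ℕ}
    (A : Fin n3 → Matrix (Fin n1) (Fin n2) ℝ) (B : Fin n3 → Matrix (Fin n2) (Fin m) ℝ)
    (C : Fin n3 → Matrix (Fin n1) (Fin m) ℝ) :
    tmat C = tmat A * tmat B ↔ ∀ i, tSlice C i = tSlice A i * tSlice B i := by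
  rw [tmat_eq_iff]
  constructor
  · intro h k
    have h1 := cosV_blk C k ⟨0, k.pos⟩
    simp only [h, cosV_blk_mul] at h1
    exact (smul_right_injective _ (cosV_zero_pos k.isLt).ne' h1).symm
  · intro h p q
    ext i j
    have := cosV_injective (fun p => (blk C p q - ∑ r, blk A p r * blk B r q) i j) (by
      intro k
      have h1 : ∑ p : Fin n3, cosV n3 k p • (blk C p q - ∑ r, blk A p r * blk B r q) = 0 := by
        simp only [smul_sub, Finset.sum_sub_distrib]
        rw [cosV_blk, cosV_blk_mul, h, sub_self]
      have h2 := congrFun (congrFun h1 i) j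
      rw [Matrix.sum_apply] at h2
      simpa only [Matrix.smul_apply, smul_eq_mul, Matrix.zero_apply] using h2)
    have h3 := congrFun this p
    simp only [Matrix.sub_apply, Pi.zero_apply] at h3
    exact sub_eq_zero.1 h3

end
end

section
/- A tensor A ∈ ℝ^{n×n×n3} is invertible with respect to the c-product if and only if the matrix mat(A) is invertible; that is, there exists a tensor B ∈ ℝ^{n×n×n3} with mat(A)·mat(B) = I_{n·n3} and mat(B)·mat(A) = I_{n·n3} if and only if mat(A) is an invertible matrix. (The nontrivial direction is that the inverse of an invertible matrix of the form mat(A) is again of the form mat(B) for some tensor B.) -/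
open Matrix BigOperators Kronecker

noncomputable section

def upF {n : ℕ} (p : Fin n) : Fin n :=
  if h : p.val + 1 < n then ⟨p.val + 1, h⟩ else p

def dnF {n : ℕ} (p : Fin n) : Fin n := ⟨p.val - 1, by have := p.isLt; omega⟩

/-- Adjacency operator of the path with reflecting ends. -/
def pathT (n : ℕ) : Matrix (Fin n) (Fin n) ℝ :=
  Matrix.of fun p q => (if q = upF p then 1 else 0) + (if q = dnF p then 1 else 0)

lemma pathT_symm {n : ℕ} (p q : Fin n) : pathT n p q = pathT n q p := by
  have h : ∀ p q : Fin n, pathT n p q =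
      (if p.val + 1 = q.val ∨ (p.val + 1 = n ∧ q.val + 1 = n) then 1 else 0)
      + (if q.val + 1 = p.val ∨ (p.val = 0 ∧ q.val = 0) then 1 else 0) := by
    intro p q
    have hp := p.isLt
    have hq := q.isLt
    simp only [pathT, Matrix.of_apply]
    congr 1
    · refine if_congr ?_ rfl rfl
      unfold upF
      split_ifs <;> simp only [Fin.ext_iff] <;> omega
    · refine if_congr ?_ rfl rfl
      unfold dnF
      simp only [Fin.ext_iff]; omega
  rw [h, h]
  have hp := p.isLt
  have hq := q.isLt
  split_ifs <;> first | (exfalso; omega) | norm_num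

def bigT (n3 n : ℕ) : Matrix (Fin n3 × Fin n) (Fin n3 × Fin n) ℝ :=
  Matrix.of fun a b => if a.2 = b.2 then pathT n3 a.1 b.1 else 0

lemma bigT_mul {n3 n : ℕ} (X : Matrix (Fin n3 × Fin n) (Fin n3 × Fin n) ℝ)
    (p q : Fin n3) (i j : Fin n) :
    (bigT n3 n * X) (p, i) (q, j) = X (upF p, i) (q, j) + X (dnF p, i) (q, j) := by
  rw [Matrix.mul_apply, Fintype.sum_prod_type]
  simp [bigT, pathT, add_mul, Finset.sum_add_distrib]

lemma mul_bigT {n3 n : ℕ} (X : Matrix (Fin n3 × Fin n) (Fin n3 × Fin n) ℝ)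
    (p q : Fin n3) (i j : Fin n) :
    (X * bigT n3 n) (p, i) (q, j) = X (p, i) (upF q, j) + X (p, i) (dnF q, j) := by
  rw [Matrix.mul_apply, Fintype.sum_prod_type]
  simp only [bigT, Matrix.of_apply, pathT_symm _ q]
  simp [pathT, mul_add, Finset.sum_add_distrib]

/-- Extension of the tensor slices by reflection. -/
def extA {n3 n : ℕ} (A : Fin n3 → Matrix (Fin n) (Fin n) ℝ) (i j : Fin n) (k : ℕ) : ℝ :=
  if h : k < n3 then A ⟨k, h⟩ i j else if h' : n3 < k ∧ k ≤ 2 * n3 then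
    A ⟨2 * n3 - k, by omega⟩ i j else 0

lemma extA_refl {n3 n : ℕ} (A : Fin n3 → Matrix (Fin n) (Fin n) ℝ) (i j : Fin n) (k l : ℕ)
    (h : k + l = 2 * n3) : extA A i j k = extA A i j l := by
  unfold extA
  obtain rfl : l = 2 * n3 - k := by omega
  split_ifs <;> first | omega | rfl | (congr; omega)

def extX {n3 n : ℕ} (A : Fin n3 → Matrix (Fin n) (Fin n) ℝ) (i j : Fin n) (p q : ℕ) : ℝ :=
  extA A i j (Nat.dist p q) + extA A i j (p + q + 1)

lemma tmat_eq {n3 n : ℕ} (A : Fin n3 → Matrix (Fin n) (Fin n) ℝ) (p q : Fin n3) (i j : Fin n) :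
    tmat A (p, i) (q, j) = extX A i j p.val q.val := by
  have hp := p.isLt
  have hq := q.isLt
  have hd : Nat.dist p.val q.val < n3 := by simp only [Nat.dist]; omega
  simp only [tmat, Matrix.of_apply, Matrix.add_apply, extX]
  congr 1
  · simp [extA, hd]
  · unfold hankelPart extA
    split_ifs <;> first | omega | rfl | (congr 1; omega) | skip

lemma extX_comm {n3 n : ℕ} (A : Fin n3 → Matrix (Fin n) (Fin n) ℝ) (i j : Fin n) (p q : ℕ) :
    extX A i j p q = extX A i j q p := by
  simp only [extX, Nat.dist_comm p q, Nat.add_comm p q]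

lemma extX_up {n3 n : ℕ} (A : Fin n3 → Matrix (Fin n) (Fin n) ℝ) (i j : Fin n) (p q : Fin n3) :
    extX A i j (upF p).val q.val = extX A i j (p.val + 1) q.val := by
  have hp := p.isLt
  have hq := q.isLt
  unfold upF
  split_ifs with h
  · rfl
  · unfold extX
    rw [add_comm]
    congr 1 <;> refine extA_refl A i j _ _ ?_ <;> simp only [Nat.dist] <;> omega

lemma extX_rec {n3 n : ℕ} (A : Fin n3 → Matrix (Fin n) (Fin n) ℝ) (i j : Fin n) (p q : ℕ) :
    extX A i j (p + 1) q + extX A i j (p - 1) q = extX A i j p (q + 1) + extX A i j p (q - 1) := by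
  rcases p with _ | p <;> rcases q with _ | q <;> simp only [extX, Nat.dist]
  · have e1 : 0 + 1 - (q + 1) + (q + 1 - (0 + 1)) = q := by omega
    simp [e1]
    ring_nf
  · simp
    ring_nf
  · have e1 : p + 1 + 1 - (q + 1) + (q + 1 - (p + 1 + 1)) = p + 1 - q + (q - (p + 1)) := by omega
    have e2 : p + 1 - (q + 1 + 1) + (q + 1 + 1 - (p + 1)) = p - (q + 1) + (q + 1 - p) := by omega
    simp only [e1, e2, Nat.add_sub_cancel]
    ring_nf

lemma tmat_comm {n3 n : ℕ} (A : Fin n3 → Matrix (Fin n) (Fin n) ℝ) :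
    bigT n3 n * tmat A = tmat A * bigT n3 n := by
  ext ⟨p, i⟩ ⟨q, j⟩
  rw [bigT_mul, mul_bigT]
  simp only [tmat_eq]
  rw [extX_up, extX_comm A i j p.val (upF q).val, extX_up, extX_comm A i j (q.val + 1) p.val]
  exact extX_rec A i j p.val q.val

lemma eq_zero_of_comm {n3 n : ℕ} (X : Matrix (Fin n3 × Fin n) (Fin n3 × Fin n) ℝ)
    (hX : bigT n3 n * X = X * bigT n3 n)
    (h0 : ∀ (p q : Fin n3) (i j : Fin n), q.val = 0 → X (p, i) (q, j) = 0) : X = 0 := by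
  have key : ∀ (m : ℕ) (p q : Fin n3) (i j : Fin n), q.val = m → X (p, i) (q, j) = 0 := by
    intro m
    induction m using Nat.strong_induction_on with
    | _ m ih =>
      intro p q i j hq
      rcases m with _ | m
      · exact h0 p q i j hq
      · have hlt := q.isLt
        let r : Fin n3 := ⟨m, by omega⟩
        have hr : upF r = q := by
          unfold upF
          rw [dif_pos (show r.val + 1 < n3 by simp only [r]; omega)]
          ext; simp only [r]; omega
        have h := congrFun (congrFun hX (p, i)) (r, j)
        rw [bigT_mul, mul_bigT, hr, ih m (by omega) _ r _ _ rfl, ih m (by omega) _ r _ _ rfl,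
          ih (m - 1) (by omega) _ (dnF r) _ _ rfl] at h
        linarith
  ext ⟨p, i⟩ ⟨q, j⟩
  exact key _ p q i j rfl

def solveE (c : ℕ → ℝ) (n : ℕ) : ℕ → ℝ
  | 0 => 0
  | m + 1 => c (n - 1 - m) - solveE c n m

lemma exists_tmat {n3 n : ℕ} (X : Matrix (Fin n3 × Fin n) (Fin n3 × Fin n) ℝ)
    (hX : bigT n3 n * X = X * bigT n3 n) :
    ∃ B : Fin n3 → Matrix (Fin n) (Fin n) ℝ, tmat B = X := by
  let c : Fin n → Fin n → ℕ → ℝ := fun i j l =>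
    if h : l < n3 then X (⟨l, h⟩, i) (⟨0, by omega⟩, j) else 0
  let B : Fin n3 → Matrix (Fin n) (Fin n) ℝ := fun k => Matrix.of fun i j =>
    solveE (c i j) n3 (n3 - k.val)
  refine ⟨B, sub_eq_zero.mp (eq_zero_of_comm _ ?_ ?_)⟩
  · rw [mul_sub, sub_mul, hX, tmat_comm]
  · intro p q i j hq
    have hp := p.isLt
    have e : ∀ k, k ≤ n3 → extA B i j k = solveE (c i j) n3 (n3 - k) := by
      intro k hk
      unfold extA
      split_ifs with h1 h2
      · rfl
      · omega
      · have : n3 - k = 0 := by omega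
        rw [this]; rfl
    have hq' : q = ⟨0, by omega⟩ := Fin.ext hq
    rw [Matrix.sub_apply, tmat_eq, hq, extX, Nat.dist_zero_right, e _ (by omega), e _ (by omega)]
    have h1 : n3 - p.val = (n3 - (p.val + 0 + 1)) + 1 := by omega
    have h2 : n3 - 1 - (n3 - (p.val + 0 + 1)) = p.val := by omega
    rw [h1, solveE, h2, hq']
    simp [c]

/-- a tensor `A ∈ ℝ^{n×n×n3}` is invertible with respect to the c-product if and
only if the matrix `mat(A)` is invertible. -/
theorem cProd_invertible_iff {n n3 : ℕ} (A : Fin n3 → Matrix (Fin n) (Fin n) ℝ) :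
    (∃ B : Fin n3 → Matrix (Fin n) (Fin n) ℝ,
        tmat A * tmat B = 1 ∧ tmat B * tmat A = 1) ↔ IsUnit (tmat A) := by
  constructor
  · rintro ⟨B, h1, h2⟩
    exact ⟨⟨tmat A, tmat B, h1, h2⟩, rfl⟩
  · rintro ⟨u, hu⟩
    have hc : Commute (bigT n3 n) (u : Matrix (Fin n3 × Fin n) (Fin n3 × Fin n) ℝ) := by
      rw [hu]; exact tmat_comm A
    obtain ⟨B, hB⟩ := exists_tmat _ hc.units_inv_right.eq
    refine ⟨B, ?_, ?_⟩
    · rw [hB, ← hu]; exact u.mul_inv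
    · rw [hB, ← hu]; exact u.inv_mul

end
end

section
/- Tensor singular value decomposition (c-SVD): every tensor A ∈ ℝ^{n1×n2×n3} can be factored as A = U ⋆_c S ⋆_c Vᵀ, i.e. there exist tensors U ∈ ℝ^{n1×n1×n3}, S ∈ ℝ^{n1×n2×n3} and V ∈ ℝ^{n2×n2×n3} such that mat(A) = mat(U)·mat(S)·mat(V)ᵀ, the matrices mat(U) and mat(V) are orthogonal (mat(U)ᵀmat(U) = I and mat(V)ᵀmat(V) = I), and S is f-diagonal (every frontal slice S^{(k)} is a diagonal matrix). -/
open Matrix BigOperators Kronecker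

noncomputable section

lemma cs_sum_cos (n : ℕ) (θ : ℝ) (hs : Real.sin θ ≠ 0) (h2 : Real.sin (2 * n * θ) = 0) :
    ∑ q : Fin n, Real.cos ((2 * (q : ℝ) + 1) * θ) = 0 := by
  have key : ∀ m : ℕ, 2 * Real.sin θ * ∑ q ∈ Finset.range m, Real.cos ((2 * (q : ℝ) + 1) * θ)
      = Real.sin (2 * m * θ) := by
    intro m
    induction m with
    | zero => simp
    | succ m ih =>
      rw [Finset.sum_range_succ, mul_add, ih]
      have e1 : 2 * (m : ℝ) * θ = (2 * m + 1) * θ - θ := by ring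
      have e2 : 2 * ((m + 1 : ℕ) : ℝ) * θ = (2 * m + 1) * θ + θ := by push_cast; ring
      rw [e1, e2, Real.sin_sub, Real.sin_add]; ring
  have := key n
  rw [h2, Finset.sum_range] at this
  simpa [hs] using this

lemma cs_sum_cos_int (n : ℕ) (m : ℤ) (h0 : m ≠ 0) (h1 : m < 2 * n) (h2 : -(2 * n) < m) :
    ∑ q : Fin n, Real.cos ((2 * (q : ℝ) + 1) * (m * Real.pi / (2 * n))) = 0 := by
  have hn : (0 : ℝ) < n := by
    have : 0 < n := by omega
    exact_mod_cast this
  apply cs_sum_cos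
  · intro h
    rw [Real.sin_eq_zero_iff] at h
    obtain ⟨k, hk⟩ := h
    have hpi := Real.pi_pos
    have hk2 : (k : ℝ) * (2 * n) = m := by
      field_simp at hk
      nlinarith
    have hk3 : k * (2 * n) = m := by exact_mod_cast hk2
    have : k ≠ 0 := by rintro rfl; simp at hk3; exact h0 hk3.symm
    rcases lt_or_gt_of_ne this with h | h
    · have : k ≤ -1 := by omega
      nlinarith
    · have : 1 ≤ k := by omega
      nlinarith
  · have : 2 * (n : ℝ) * (m * Real.pi / (2 * n)) = m * Real.pi := by field_simp
    rw [this]; exact Real.sin_int_mul_pi m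

lemma dct_row_orth (n : ℕ) : dctMatrix n * (dctMatrix n)ᵀ = 1 := by
  ext k l
  have hn0 : 0 < n := k.pos
  have hn : (0 : ℝ) < n := by exact_mod_cast hn0
  have hk := k.isLt
  have hl := l.isLt
  simp only [Matrix.mul_apply, Matrix.transpose_apply, dctMatrix, Matrix.of_apply]
  have e : ∀ q : Fin n, Real.cos ((k : ℝ) * (2 * (q : ℝ) + 1) * Real.pi / (2 * n)) *
      Real.cos ((l : ℝ) * (2 * (q : ℝ) + 1) * Real.pi / (2 * n)) =
      (1 / 2) * (Real.cos ((2 * (q : ℝ) + 1) * ((((k : ℤ) - (l : ℤ) : ℤ) : ℝ) * Real.pi / (2 * n))) +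
       Real.cos ((2 * (q : ℝ) + 1) * ((((k : ℤ) + (l : ℤ) : ℤ) : ℝ) * Real.pi / (2 * n)))) := by
    intro q
    have e1 : (2 * (q : ℝ) + 1) * ((((k : ℤ) - (l : ℤ) : ℤ) : ℝ) * Real.pi / (2 * n)) =
      (k : ℝ) * (2 * (q : ℝ) + 1) * Real.pi / (2 * n) - (l : ℝ) * (2 * (q : ℝ) + 1) * Real.pi / (2 * n) := by
      push_cast; ring
    have e2 : (2 * (q : ℝ) + 1) * ((((k : ℤ) + (l : ℤ) : ℤ) : ℝ) * Real.pi / (2 * n)) =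
      (k : ℝ) * (2 * (q : ℝ) + 1) * Real.pi / (2 * n) + (l : ℝ) * (2 * (q : ℝ) + 1) * Real.pi / (2 * n) := by
      push_cast; ring
    rw [e1, e2, Real.cos_sub, Real.cos_add]; ring
  simp_rw [mul_mul_mul_comm _ (Real.cos _), e]
  rw [← Finset.mul_sum, ← Finset.mul_sum, Finset.sum_add_distrib]
  by_cases hkl : k = l
  · subst hkl
    rw [Real.mul_self_sqrt (by split_ifs <;> positivity)]
    by_cases h0 : (k : ℕ) = 0
    · simp [h0]; field_simp; norm_num
    · rw [cs_sum_cos_int n ((k : ℤ) + (k : ℤ)) (by omega) (by omega) (by omega)]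
      simp [h0]; field_simp
  · have : (k : ℕ) ≠ l := fun h => hkl (Fin.ext h)
    rw [cs_sum_cos_int n ((k : ℤ) + (l : ℤ)) (by omega) (by omega) (by omega),
      cs_sum_cos_int n ((k : ℤ) - (l : ℤ)) (by omega) (by omega) (by omega)]
    simp [hkl]

lemma dct_col_orth (n : ℕ) : (dctMatrix n)ᵀ * dctMatrix n = 1 :=
  mul_eq_one_comm.mp (dct_row_orth n)

def lamCoef (n : ℕ) (k j : Fin n) : ℝ :=
  if (j : ℕ) = 0 then 1 else 2 * Real.cos (k * j * Real.pi / n)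

def thCoef (n : ℕ) (p q j : ℕ) : ℝ :=
  (if Nat.dist p q = j then 1 else 0) + (if p + q + 1 = j then 1 else 0) +
    (if p + q + 1 + j = 2 * n then 1 else 0)

lemma sum_fin_ite {n : ℕ} (v : Fin n → ℝ) (a : ℕ) (h : a < n) :
    ∑ j : Fin n, (if a = (j : ℕ) then 1 else 0) * v j = v ⟨a, h⟩ := by
  rw [Finset.sum_eq_single ⟨a, h⟩]
  · simp
  · intro b _ hb
    rw [if_neg, zero_mul]
    rintro rfl; exact hb rfl
  · simp

lemma thMat_eq {n : ℕ} (v : Fin n → ℝ) (p q : Fin n) :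
    thMat v p q = ∑ j : Fin n, thCoef n p q j * v j := by
  have hp := p.isLt
  have hq := q.isLt
  simp only [thMat, Matrix.of_apply, thCoef, add_mul, Finset.sum_add_distrib, add_assoc]
  rw [sum_fin_ite v (Nat.dist p q) (by simp only [Nat.dist]; omega)]
  congr 1
  split_ifs with h h'
  · rw [sum_fin_ite v _ h]
    rw [Finset.sum_eq_zero, add_zero]
    intro j _
    have := j.isLt
    rw [if_neg (by omega), zero_mul]
  · rw [Finset.sum_eq_zero, Finset.sum_eq_zero, add_zero] <;>
    · intro j _
      have := j.isLt
      rw [if_neg (by omega), zero_mul]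
  · rw [Finset.sum_eq_zero, zero_add]
    · rw [← sum_fin_ite v]
      refine Finset.sum_congr rfl fun j _ => ?_
      have := j.isLt
      congr 1
      by_cases h3 : (p : ℕ) + (q + (1 + j)) = 2 * n
      · rw [if_pos h3, if_pos (by omega)]
      · rw [if_neg h3, if_neg (by omega)]
    · intro j _
      have := j.isLt
      rw [if_neg (by omega), zero_mul]

lemma thCoef_eigen (n : ℕ) (k p j : Fin n) :
    ∑ q : Fin n, thCoef n p q j * Real.cos ((k : ℝ) * (2 * (q : ℝ) + 1) * Real.pi / (2 * n))
      = lamCoef n k j * Real.cos ((k : ℝ) * (2 * (p : ℝ) + 1) * Real.pi / (2 * n)) := by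
  have hp := p.isLt
  have hj := j.isLt
  have hn : (0 : ℝ) < n := by
    have : 0 < n := by omega
    exact_mod_cast this
  by_cases h0 : (j : ℕ) = 0
  · have : ∀ q : Fin n, thCoef n p q j = if (p : ℕ) = (q : ℕ) then 1 else 0 := by
      intro q
      have hq := q.isLt
      obtain ⟨d, hd⟩ : ∃ d, d = Nat.dist p q := ⟨_, rfl⟩
      simp only [thCoef, ← hd, h0]
      simp only [Nat.dist] at hd
      rw [if_neg (by omega : ¬ (p : ℕ) + q + 1 = 0), if_neg (by omega : ¬ (p : ℕ) + q + 1 + 0 = 2 * n)]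
      simp only [add_zero]
      congr 1
      apply propext; omega
    simp_rw [this]
    rw [sum_fin_ite (fun q : Fin n => Real.cos ((k : ℝ) * (2 * (q : ℝ) + 1) * Real.pi / (2 * n))) _ hp]
    simp [lamCoef, h0]
  · obtain ⟨a, ha, ha', hac⟩ : ∃ a : ℕ, a < n ∧ ((a : ℤ) = p - j ∨ ((a : ℤ) = j - p - 1)) ∧
        Real.cos ((k : ℝ) * (2 * (a : ℝ) + 1) * Real.pi / (2 * n)) =
        Real.cos ((k : ℝ) * (2 * ((p : ℝ) - j) + 1) * Real.pi / (2 * n)) := by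
      by_cases h : (j : ℕ) ≤ p
      · refine ⟨p - j, by omega, by omega, ?_⟩
        rw [Nat.cast_sub h]
      · refine ⟨j - (p + 1), by omega, by omega, ?_⟩
        rw [Nat.cast_sub (by omega), ← Real.cos_neg]
        congr 1; push_cast; ring
    obtain ⟨b, hb, hb', hbc⟩ : ∃ b : ℕ, b < n ∧ (b = (p : ℕ) + j ∨ (b + p + 1 + j = 2 * n)) ∧
        Real.cos ((k : ℝ) * (2 * (b : ℝ) + 1) * Real.pi / (2 * n)) =
        Real.cos ((k : ℝ) * (2 * ((p : ℝ) + j) + 1) * Real.pi / (2 * n)) := by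
      by_cases h : (p : ℕ) + j < n
      · refine ⟨p + j, by omega, by omega, ?_⟩
        push_cast; rfl
      · refine ⟨2 * n - (p + j + 1), by omega, by omega, ?_⟩
        rw [Nat.cast_sub (by omega), ← Real.cos_neg, ← Real.cos_add_nat_mul_two_pi _ k]
        congr 1; push_cast; field_simp; ring
    have : ∀ q : Fin n, thCoef n p q j = (if a = (q : ℕ) then 1 else 0) + if b = (q : ℕ) then 1 else 0 := by
      intro q
      have hq := q.isLt
      obtain ⟨d, hd⟩ : ∃ d, d = Nat.dist p q := ⟨_, rfl⟩
      simp only [thCoef, ← hd]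
      simp only [Nat.dist] at hd
      split_ifs <;> first | omega | norm_num
    simp_rw [this, add_mul, Finset.sum_add_distrib]
    rw [sum_fin_ite (fun q : Fin n => Real.cos ((k : ℝ) * (2 * (q : ℝ) + 1) * Real.pi / (2 * n))) _ ha,
      sum_fin_ite (fun q : Fin n => Real.cos ((k : ℝ) * (2 * (q : ℝ) + 1) * Real.pi / (2 * n))) _ hb]
    simp only
    rw [hac, hbc]
    simp only [lamCoef, h0, if_false]
    have e1 : (k : ℝ) * (2 * ((p : ℝ) - j) + 1) * Real.pi / (2 * n) =
      (k : ℝ) * (2 * (p : ℝ) + 1) * Real.pi / (2 * n) - k * j * Real.pi / n := by field_simp; ring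
    have e2 : (k : ℝ) * (2 * ((p : ℝ) + j) + 1) * Real.pi / (2 * n) =
      (k : ℝ) * (2 * (p : ℝ) + 1) * Real.pi / (2 * n) + k * j * Real.pi / n := by field_simp; ring
    rw [e1, e2, Real.cos_sub, Real.cos_add]; ring

def lam (n : ℕ) : Matrix (Fin n) (Fin n) ℝ := Matrix.of (lamCoef n)

lemma thMat_mul_dct {n : ℕ} (v : Fin n → ℝ) :
    thMat v * (dctMatrix n)ᵀ = (dctMatrix n)ᵀ * Matrix.diagonal (lam n *ᵥ v) := by
  ext p k
  rw [Matrix.mul_diagonal]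
  simp only [Matrix.mul_apply, Matrix.transpose_apply, thMat_eq, dctMatrix, Matrix.of_apply,
    Finset.sum_mul, Matrix.mulVec, dotProduct, lam, Finset.mul_sum]
  rw [Finset.sum_comm]
  refine Finset.sum_congr rfl fun j _ => ?_
  have := thCoef_eigen n k p j
  calc _ = Real.sqrt ((2 - if (k : ℕ) = 0 then 1 else 0) / n) * v j * ∑ q : Fin n, thCoef n p q j * Real.cos ((k : ℝ) * (2 * (q : ℝ) + 1) * Real.pi / (2 * n)) := by
        rw [Finset.mul_sum]; exact Finset.sum_congr rfl fun q _ => by ring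
    _ = _ := by rw [this]; ring

lemma thMat_diag {n : ℕ} (v : Fin n → ℝ) :
    thMat v = (dctMatrix n)ᵀ * Matrix.diagonal (lam n *ᵥ v) * dctMatrix n := by
  rw [← thMat_mul_dct, Matrix.mul_assoc, dct_col_orth, Matrix.mul_one]

lemma lam_inj (n : ℕ) (v : Fin n → ℝ) (h : lam n *ᵥ v = 0) : v = 0 := by
  have h1 : thMat v = 0 := by rw [thMat_diag, h]; simp
  have h2 : ∀ d : ℕ, ∀ j : Fin n, (j : ℕ) + 1 + d = n → v j = 0 := by
    intro d
    induction d with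
    | zero =>
      intro j hj
      have := congrFun (congrFun h1 j) ⟨0, j.pos⟩
      simpa [thMat, hj, Nat.dist] using this
    | succ d ih =>
      intro j hj
      have := congrFun (congrFun h1 j) ⟨0, j.pos⟩
      have hlt : (j : ℕ) + 1 < n := by omega
      simpa [thMat, hlt, Nat.dist, ih ⟨j + 1, hlt⟩ (by simp; omega)] using this
  ext j
  exact h2 (n - (j + 1)) j (by omega)

lemma lam_surj (n : ℕ) (w : Fin n → ℝ) : ∃ v, lam n *ᵥ v = w := by
  have hi : Function.Injective (lam n).mulVecLin := by
    rw [injective_iff_map_eq_zero]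
    intro v hv
    exact lam_inj n v hv
  exact (LinearMap.injective_iff_surjective.mp hi) w

lemma real_svd {m n : ℕ} (A : Matrix (Fin m) (Fin n) ℝ) :
    ∃ (U : Matrix (Fin m) (Fin m) ℝ) (S : Matrix (Fin m) (Fin n) ℝ) (V : Matrix (Fin n) (Fin n) ℝ),
      A = U * S * Vᵀ ∧ Uᵀ * U = 1 ∧ Vᵀ * V = 1 ∧
      ∀ (i : Fin m) (j : Fin n), (i : ℕ) ≠ (j : ℕ) → S i j = 0 := by
  have hH : (Aᵀ * A).IsHermitian := by
    simpa [Matrix.conjTranspose_eq_transpose_of_trivial] using Matrix.isHermitian_conjTranspose_mul_self A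
  -- orthogonal matrix of eigenvectors with pairwise orthogonal images
  obtain ⟨W, hW, D, hD⟩ : ∃ W : Matrix (Fin n) (Fin n) ℝ, Wᵀ * W = 1 ∧
      ∃ D : Fin n → ℝ, (A * W)ᵀ * (A * W) = Matrix.diagonal D := by
    refine ⟨hH.eigenvectorUnitary, ?_, hH.eigenvalues, ?_⟩
    · have := Unitary.coe_star_mul_self hH.eigenvectorUnitary
      rwa [Matrix.star_eq_conjTranspose, Matrix.conjTranspose_eq_transpose_of_trivial] at this
    · have h1 := Unitary.coe_star_mul_self hH.eigenvectorUnitary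
      rw [Matrix.star_eq_conjTranspose, Matrix.conjTranspose_eq_transpose_of_trivial] at h1
      have h2 : Aᵀ * A * (hH.eigenvectorUnitary : Matrix (Fin n) (Fin n) ℝ) =
          (hH.eigenvectorUnitary : Matrix (Fin n) (Fin n) ℝ) * Matrix.diagonal hH.eigenvalues := by
        ext i j
        have := congrFun (hH.mulVec_eigenvectorBasis j) i
        rw [Matrix.mul_diagonal, Matrix.mul_apply]
        simp only [hH.eigenvectorUnitary_apply]
        rw [Matrix.mulVec, dotProduct] at this
        rw [this]; simp [mul_comm]
      rw [Matrix.transpose_mul, Matrix.mul_assoc, ← Matrix.mul_assoc Aᵀ, h2, ← Matrix.mul_assoc, h1,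
        Matrix.one_mul]
  -- the images as Euclidean vectors
  let f : Fin n → EuclideanSpace ℝ (Fin m) := fun j => WithLp.toLp 2 (fun i => (A * W) i j)
  have hf : ∀ i j, inner ℝ (f i) (f j) = Matrix.diagonal D i j := by
    intro i j
    rw [← hD]
    simp [f, Matrix.mul_apply, PiLp.inner_apply, mul_comm]
  have hf0 : ∀ i j, i ≠ j → inner ℝ (f i) (f j) = 0 := by
    intro i j hij; rw [hf, Matrix.diagonal_apply_ne _ hij]
  have hcard : Fintype.card {j : Fin n // f j ≠ 0} ≤ m := by
    have hli : LinearIndependent ℝ (fun j : {j : Fin n // f j ≠ 0} => f j) := by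
      apply linearIndependent_of_ne_zero_of_inner_eq_zero (𝕜 := ℝ)
      · exact fun j => j.2
      · intro i j hij
        exact hf0 _ _ (fun h => hij (Subtype.ext h))
    simpa using hli.fintype_card_le_finrank
  have hrn : Fintype.card {j : Fin n // f j ≠ 0} ≤ n := by
    simpa using Fintype.card_subtype_le (fun j : Fin n => f j ≠ 0)
  -- permutation putting nonzero images first
  obtain ⟨σ, hσ⟩ : ∃ σ : Equiv.Perm (Fin n), ∀ j, f (σ j) ≠ 0 → (j : ℕ) < m := by
    have hc : Fintype.card {j : Fin n // f j ≠ 0} =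
        Fintype.card {j : Fin n // (j : ℕ) < Fintype.card {j : Fin n // f j ≠ 0}} := by
      generalize Fintype.card {j : Fin n // f j ≠ 0} = r at hrn
      rw [Fintype.card_subtype]
      rw [Fin.card_filter_val_lt]; omega
    let e := (Fintype.equivOfCardEq hc).extendSubtype
    refine ⟨e.symm, fun j hj => ?_⟩
    have := (Fintype.equivOfCardEq hc).extendSubtype_mem (e.symm j) hj
    have h3 : e (e.symm j) = j := e.apply_symm_apply j
    change ((e (e.symm j) : Fin n) : ℕ) < _ at this
    rw [h3] at this
    omega
  let g : Fin m → EuclideanSpace ℝ (Fin m) := fun i =>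
    if h : (i : ℕ) < n then (‖f (σ ⟨i, h⟩)‖⁻¹ : ℝ) • f (σ ⟨i, h⟩) else 0
  let s : Set (Fin m) := {i | ∃ h : (i : ℕ) < n, f (σ ⟨i, h⟩) ≠ 0}
  have hg : Orthonormal ℝ (s.domRestrict g) := by
    constructor
    · rintro ⟨i, h, hi⟩
      have : ‖f (σ ⟨i, h⟩)‖ ≠ 0 := norm_ne_zero_iff.mpr hi
      simp [g, h, norm_smul, this]
    · rintro ⟨i, h, hi⟩ ⟨j, h', hj⟩ hij
      have : (i : ℕ) ≠ j := fun hh => hij (Subtype.ext (Fin.ext hh))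
      have h2 : inner ℝ (f (σ ⟨i, h⟩)) (f (σ ⟨j, h'⟩)) = 0 := by
        apply hf0; intro hh; apply this; simpa using hh
      simp [g, h, h', inner_smul_left, inner_smul_right, h2]
  obtain ⟨b, hb⟩ := hg.exists_orthonormalBasis_extension_of_card_eq (by simp)
  have hbf : ∀ (i : Fin m) (j : Fin n), (i : ℕ) = j → f (σ j) = ‖f (σ j)‖ • b i := by
    intro i j hij
    by_cases h0 : f (σ j) = 0
    · simp [h0]
    · have hin : (i : ℕ) < n := by have := j.isLt; omega
      have hji : (⟨i, hin⟩ : Fin n) = j := Fin.ext hij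
      have : ‖f (σ j)‖ ≠ 0 := norm_ne_zero_iff.mpr h0
      rw [hb i ⟨hin, by rwa [hji]⟩]
      simp only [g, hin, dif_pos, hji]
      rw [smul_smul, mul_inv_cancel₀ this, one_smul]
  let U : Matrix (Fin m) (Fin m) ℝ := Matrix.of fun r i => b i r
  let S : Matrix (Fin m) (Fin n) ℝ := Matrix.of fun i j => if (i : ℕ) = j then ‖f (σ j)‖ else 0
  let V : Matrix (Fin n) (Fin n) ℝ := Matrix.of fun r j => W r (σ j)
  have hV : Vᵀ * V = 1 := by
    ext i j
    have := congrFun (congrFun hW (σ i)) (σ j)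
    simpa [V, Matrix.mul_apply, Matrix.one_apply] using this
  have hU : Uᵀ * U = 1 := by
    ext i j
    have := orthonormal_iff_ite.mp b.orthonormal i j
    simpa [U, Matrix.mul_apply, Matrix.one_apply, PiLp.inner_apply, mul_comm] using this
  refine ⟨U, S, V, ?_, hU, hV, ?_⟩
  · have hAV : A * V = U * S := by
      ext r j
      have h1 : (A * V) r j = f (σ j) r := by simp [V, f, Matrix.mul_apply]
      rw [h1, Matrix.mul_apply]
      by_cases hj : (j : ℕ) < m
      · rw [Finset.sum_eq_single ⟨j, hj⟩]
        · have := congrArg (fun x : EuclideanSpace ℝ (Fin m) => x r) (hbf ⟨j, hj⟩ j rfl)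
          simp only [PiLp.smul_apply, smul_eq_mul] at this
          simp only [U, S, Matrix.of_apply, if_true]
          rw [this, mul_comm]
        · intro i _ hi
          have : (i : ℕ) ≠ j := fun hh => hi (Fin.ext hh)
          simp [S, this]
        · simp
      · have h0 : f (σ j) = 0 := by
          by_contra h; exact hj (hσ j h)
        simp [S, h0]
    rw [← hAV, Matrix.mul_assoc, mul_eq_one_comm.mp hV, Matrix.mul_one]
  · intro i j hij
    simp [S, hij]

/-- Block matrix `(Cᵀ ⊗ I) · blockdiag(X) · (C ⊗ I)`. -/
def conjBlk {n1 n2 n3 : ℕ} (X : Fin n3 → Matrix (Fin n1) (Fin n2) ℝ) :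
    Matrix (Fin n3 × Fin n1) (Fin n3 × Fin n2) ℝ :=
  Matrix.of fun a b => ∑ k, dctMatrix n3 k a.1 * X k a.2 b.2 * dctMatrix n3 k b.1

lemma conjBlk_transpose {n1 n2 n3 : ℕ} (X : Fin n3 → Matrix (Fin n1) (Fin n2) ℝ) :
    (conjBlk X)ᵀ = conjBlk (fun k => (X k)ᵀ) := by
  ext a b
  simp only [conjBlk, Matrix.transpose_apply, Matrix.of_apply]
  exact Finset.sum_congr rfl fun k _ => by ring

lemma conjBlk_one {n1 n3 : ℕ} :
    conjBlk (fun _ : Fin n3 => (1 : Matrix (Fin n1) (Fin n1) ℝ)) = 1 := by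
  ext ⟨p, i⟩ ⟨q, j⟩
  have h := congrFun (congrFun (dct_col_orth n3) p) q
  simp only [Matrix.mul_apply, Matrix.transpose_apply] at h
  simp only [conjBlk, Matrix.of_apply]
  by_cases hij : i = j
  · subst hij
    simp [h, Matrix.one_apply]
  · simp [Matrix.one_apply, hij]

lemma conjBlk_mul {n1 n2 n4 n3 : ℕ} (X : Fin n3 → Matrix (Fin n1) (Fin n2) ℝ)
    (Y : Fin n3 → Matrix (Fin n2) (Fin n4) ℝ) :
    conjBlk X * conjBlk Y = conjBlk (fun k => X k * Y k) := by
  ext ⟨p, i⟩ ⟨q, j⟩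
  have h : ∀ k l : Fin n3, ∑ r, dctMatrix n3 k r * dctMatrix n3 l r = if k = l then 1 else 0 := by
    intro k l
    have := congrFun (congrFun (dct_row_orth n3) k) l
    simpa only [Matrix.mul_apply, Matrix.transpose_apply, Matrix.one_apply] using this
  simp only [conjBlk, Matrix.of_apply, Matrix.mul_apply, Fintype.sum_prod_type]
  calc _ = ∑ s, ∑ k, ∑ l, (dctMatrix n3 k p * X k i s * Y l s j * dctMatrix n3 l q) *
        ∑ r, dctMatrix n3 k r * dctMatrix n3 l r := by
        rw [Finset.sum_comm]
        refine Finset.sum_congr rfl fun s _ => ?_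
        simp_rw [Finset.sum_mul_sum, Finset.mul_sum]
        rw [Finset.sum_comm]
        refine Finset.sum_congr rfl fun k _ => ?_
        rw [Finset.sum_comm]
        refine Finset.sum_congr rfl fun l _ => ?_
        exact Finset.sum_congr rfl fun r _ => by ring
    _ = _ := by
        simp_rw [h]
        simp only [mul_ite, mul_one, mul_zero, Finset.sum_ite_eq, Finset.mem_univ, if_true]
        rw [Finset.sum_comm]
        refine Finset.sum_congr rfl fun k _ => ?_
        rw [Finset.mul_sum, Finset.sum_mul]
        exact Finset.sum_congr rfl fun r _ => by ring

/-- Transformed slices. -/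
def lamT {n1 n2 n3 : ℕ} (A : Fin n3 → Matrix (Fin n1) (Fin n2) ℝ) (k : Fin n3) :
    Matrix (Fin n1) (Fin n2) ℝ :=
  Matrix.of fun i j => (lam n3 *ᵥ fun t => A t i j) k

lemma tmat_eq_s8 {n1 n2 n3 : ℕ} (A : Fin n3 → Matrix (Fin n1) (Fin n2) ℝ) :
    tmat A = conjBlk (lamT A) := by
  ext ⟨p, i⟩ ⟨q, j⟩
  have h1 : tmat A (p, i) (q, j) = thMat (fun t => A t i j) p q := by
    simp only [tmat, thMat, hankelPart, Matrix.of_apply, Matrix.add_apply]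
    congr 1
    split_ifs <;> rfl
  rw [h1, thMat_diag, Matrix.mul_apply]
  simp only [Matrix.mul_diagonal, Matrix.transpose_apply, conjBlk, lamT, Matrix.of_apply]

lemma lamT_surj {n1 n2 n3 : ℕ} (X : Fin n3 → Matrix (Fin n1) (Fin n2) ℝ) :
    ∃ A : Fin n3 → Matrix (Fin n1) (Fin n2) ℝ, lamT A = X := by
  choose v hv using lam_surj n3
  refine ⟨fun t => Matrix.of fun i j => v (fun k => X k i j) t, ?_⟩
  funext k
  ext i j
  exact congrFun (hv (fun k => X k i j)) k

lemma lamT_sTranspose {n1 n2 n3 : ℕ} (A : Fin n3 → Matrix (Fin n1) (Fin n2) ℝ) :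
    lamT (sTranspose A) = fun k => (lamT A k)ᵀ := rfl

/-- c-SVD: every tensor `A ∈ ℝ^{n1×n2×n3}` factors as `A = U ⋆_c S ⋆_c Vᵀ`
with `mat(U)`, `mat(V)` orthogonal and `S` f-diagonal. -/
theorem c_svd {n1 n2 n3 : ℕ} (A : Fin n3 → Matrix (Fin n1) (Fin n2) ℝ) :
    ∃ (U : Fin n3 → Matrix (Fin n1) (Fin n1) ℝ)
      (S : Fin n3 → Matrix (Fin n1) (Fin n2) ℝ)
      (V : Fin n3 → Matrix (Fin n2) (Fin n2) ℝ),
      tmat A = tmat U * tmat S * tmat (sTranspose V) ∧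
      (tmat U)ᵀ * tmat U = 1 ∧ (tmat V)ᵀ * tmat V = 1 ∧
      ∀ k, ∀ (i : Fin n1) (j : Fin n2), (i : ℕ) ≠ (j : ℕ) → S k i j = 0 := by
  choose U' S' V' hA hU hV hS using fun k => real_svd (lamT A k)
  obtain ⟨U, rfl⟩ := lamT_surj U'
  obtain ⟨S, rfl⟩ := lamT_surj S'
  obtain ⟨V, rfl⟩ := lamT_surj V'
  refine ⟨U, S, V, ?_, ?_, ?_, ?_⟩
  · rw [tmat_eq_s8, tmat_eq_s8, tmat_eq_s8, tmat_eq_s8, conjBlk_mul, conjBlk_mul, lamT_sTranspose]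
    exact congrArg conjBlk (funext hA)
  · rw [tmat_eq_s8, conjBlk_transpose, conjBlk_mul, ← conjBlk_one]
    exact congrArg conjBlk (funext hU)
  · rw [tmat_eq_s8, conjBlk_transpose, conjBlk_mul, ← conjBlk_one]
    exact congrArg conjBlk (funext hV)
  · intro k i j hij
    have : (fun t => S t i j) = 0 := by
      apply lam_inj
      funext k
      exact hS k i j hij
    exact congrFun this k

end
end
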